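/- Let W be a word of length n ≥ 2 over a type α and suppose the initial subword W₀ of W of length n − 1 occurs at some offset r with 0 < r < n in the bi-infinite periodic extension W̃ of W. Then W is not primitive, i.e., there exist a word C and an integer m ≥ 2 with W = C^m. -/

import Mathlib

/-- `wordPow C k` is the concatenation of `k` copies of the word `C`. -/
def wordPow {α : Type*} (C : List α) (k : ℕ) : List α := (List.replicate k C).flatten

/-- `OccursAt W U r` says that the word `U` occurs at offset `r` in the bi-infinite
periodic extension `W̃` of `W`, where `W̃ i = W[i mod |W|]`. -/
def OccursAt {α : Type*} (W U : List α) (r : ℤ) : Prop :=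
  ∀ i : ℕ, i < U.length → W[((r + i) % (W.length : ℤ)).toNat]? = U[i]?

/-!
Up to its last letter, the rotation of `W` by `r` is the initial subword of `W`. Rotating does not
change the multiset of letters, so the last letters agree as well and `W` is fixed by the rotation
by `r`. It is also fixed by the rotation by its length `n`, hence by the rotation by
`d = gcd (r, n)`. As `d` is a proper divisor of `n`, the word `W` is a power of its initial subword
of length `d`.
-/

section

variable {α : Type*}

theorem wordPow_succ (C : List α) (k : ℕ) : wordPow C (k + 1) = C ++ wordPow C k := by
  simp [wordPow, List.replicate_succ]

theorem eq_wordPow_of_append_comm {C D : List α} {k : ℕ} (hcomm : C ++ D = D ++ C)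
    (hlen : D.length = k * C.length) : D = wordPow C k := by
  induction k generalizing D with
  | zero => simpa [wordPow] using hlen
  | succ k ih =>
    rw [Nat.succ_mul] at hlen
    obtain ⟨E, rfl⟩ : C <+: D :=
      List.prefix_of_prefix_length_le ⟨D, hcomm⟩ (List.prefix_append D C) (by omega)
    have hE : E = wordPow C k := by
      apply ih
      · simpa using hcomm
      · rw [List.length_append] at hlen
        omega
    rw [wordPow_succ, ← hE]

theorem eq_wordPow_of_rotate_eq_self {W : List α} {d : ℕ} (hd : d ∣ W.length)
    (h : W.rotate d = W) : W = wordPow (W.take d) (W.length / d) := by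
  rcases W.length.eq_zero_or_pos with hW | hW
  · simp [List.eq_nil_of_length_eq_zero hW, wordPow]
  have hle : d ≤ W.length := Nat.le_of_dvd hW hd
  rw [List.rotate_eq_drop_append_take hle] at h
  apply eq_wordPow_of_append_comm
  · calc W.take d ++ W = W.take d ++ (W.drop d ++ W.take d) := by rw [h]
      _ = W ++ W.take d := by rw [← List.append_assoc, List.take_append_drop]
  · rw [List.length_take_of_le hle, Nat.div_mul_cancel hd]

theorem iterate_rotate_one (W : List α) (k : ℕ) :
    (fun V : List α => V.rotate 1)^[k] W = W.rotate k := by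
  induction k with
  | zero => simp
  | succ k ih => rw [Function.iterate_succ_apply', ih, List.rotate_rotate]

theorem rotate_gcd_eq_self {W : List α} {a b : ℕ} (ha : W.rotate a = W) (hb : W.rotate b = W) :
    W.rotate (a.gcd b) = W := by
  rw [← iterate_rotate_one] at ha hb ⊢
  exact Function.IsPeriodicPt.gcd ha hb

theorem eq_of_perm_of_dropLast_eq {U V : List α} (hperm : U.Perm V)
    (h : U.dropLast = V.dropLast) : U = V := by
  rcases List.eq_nil_or_concat' U with rfl | ⟨A, a, rfl⟩
  · exact hperm.nil_eq
  rcases List.eq_nil_or_concat' V with rfl | ⟨B, b, rfl⟩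
  · exact hperm.eq_nil
  obtain rfl : A = B := by simpa only [List.dropLast_concat] using h
  rw [List.perm_append_left_iff, List.singleton_perm_singleton] at hperm
  rw [hperm]

theorem OccursAt.isPrefix_rotate {W U : List α} {r : ℤ} (hocc : OccursAt W U r)
    (hlen : U.length ≤ W.length) : U <+: W.rotate (r % W.length).toNat := by
  rw [List.prefix_iff_getElem?]
  intro i hi
  have hpos : (0 : ℤ) < W.length := by omega
  have hidx : ((r + i) % W.length).toNat = (i + (r % W.length).toNat) % W.length := by
    zify
    rw [Int.toNat_of_nonneg (Int.emod_nonneg _ hpos.ne'),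
      Int.toNat_of_nonneg (Int.emod_nonneg _ hpos.ne'), Int.add_emod_emod, add_comm]
  rw [List.getElem?_rotate (by omega), ← hidx, hocc i hi, List.getElem?_eq_getElem hi]

theorem OccursAt.rotate_eq_self {W : List α} {r : ℤ}
    (hocc : OccursAt W (W.take (W.length - 1)) r) : W.rotate (r % W.length).toNat = W := by
  apply eq_of_perm_of_dropLast_eq (List.rotate_perm W _)
  have hprefix := hocc.isPrefix_rotate (List.length_take_le' _ _)
  rw [← List.dropLast_eq_take, List.prefix_iff_eq_take, List.length_dropLast] at hprefix
  rw [List.dropLast_eq_take, List.length_rotate, ← hprefix]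

theorem statement10_general {W : List α} (hW : W ≠ []) {r : ℤ} (hr : ¬ (W.length : ℤ) ∣ r)
    (hocc : OccursAt W (W.take (W.length - 1)) r) :
    ∃ (C : List α) (m : ℕ), 2 ≤ m ∧ W = wordPow C m := by
  have hn : (0 : ℤ) < W.length := mod_cast List.length_pos_of_ne_nil hW
  set k := (r % W.length).toNat
  have hk_pos : 0 < k := by
    have := Int.emod_pos_of_not_dvd hr
    omega
  have hk_lt : k < W.length := by
    have := Int.emod_lt_of_pos r hn
    omega
  have hdvd : k.gcd W.length ∣ W.length := Nat.gcd_dvd_right _ _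
  have hlt : k.gcd W.length < W.length := (Nat.gcd_le_left _ hk_pos).trans_lt hk_lt
  have hfix : W.rotate (k.gcd W.length) = W :=
    rotate_gcd_eq_self hocc.rotate_eq_self W.rotate_length
  exact ⟨W.take (k.gcd W.length), W.length / k.gcd W.length,
    Nat.one_lt_div_of_mem_properDivisors (Nat.mem_properDivisors.2 ⟨hdvd, hlt⟩),
    eq_wordPow_of_rotate_eq_self hdvd hfix⟩

end

/-- If the initial subword of length `n - 1` of a word `W` of length `n ≥ 2` occurs at
some offset `r` with `0 < r < n` in the bi-infinite periodic extension of `W`, then `W`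
is not primitive: `W = C^m` for some word `C` and some `m ≥ 2`. -/
theorem statement10 {α : Type*} (W : List α) (n : ℕ) (hn : 2 ≤ n) (hW : W.length = n)
    (r : ℕ) (hr0 : 0 < r) (hrn : r < n)
    (hocc : OccursAt W (W.take (n - 1)) (r : ℤ)) :
    ∃ (C : List α) (m : ℕ), 2 ≤ m ∧ W = wordPow C m := by
  subst hW
  exact statement10_general (List.ne_nil_of_length_pos (by omega))
    (mod_cast Nat.not_dvd_of_pos_of_lt hr0 hrn) hocc
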